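/- (Generalised Debever identity) Let X be a (2,2) double form on 4-dimensional Minkowski space which is irreducible in the sense that there exist signs ε, ε' ∈ {1, −1} with X_{cdab} = ε X_{abcd} and (→⋆X)_{cdab} = ε' (→⋆X)_{abcd} for all indices. Then for all a,b,c,d: (→⋆X)^{a}{}_{k₁}{}^{b}{}_{k₂} (→⋆X)_{c}{}^{k₁}{}_{d}{}^{k₂} − X^{a}{}_{k₁ d k₂} X_{c}{}^{k₁ b k₂} = −(1/2) I δ^{a}_{c} δ^{b}_{d}, where I = (1/4) X_{pqrs} X^{pqrs} and all indices are raised with η. -/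

import Mathlib

noncomputable section

/-- The Minkowski metric `η = diag(+1,−1,−1,−1)` on `ℝ⁴`.  Its inverse has the
same components, so `mink` is also used to raise indices. -/
def mink : Fin 4 → Fin 4 → ℝ :=
  fun a b => if a = b then (if a = 0 then 1 else -1) else 0

/-- The totally antisymmetric Levi-Civita tensor with all indices down and
`ε₀₁₂₃ = +1`, via the Vandermonde-product formula. -/
def lev : Fin 4 → Fin 4 → Fin 4 → Fin 4 → ℝ :=
  fun a b c d =>
    (((b : ℕ) : ℝ) - ((a : ℕ) : ℝ)) * (((c : ℕ) : ℝ) - ((a : ℕ) : ℝ)) *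
    (((d : ℕ) : ℝ) - ((a : ℕ) : ℝ)) * (((c : ℕ) : ℝ) - ((b : ℕ) : ℝ)) *
    (((d : ℕ) : ℝ) - ((b : ℕ) : ℝ)) * (((d : ℕ) : ℝ) - ((c : ℕ) : ℝ)) / 12

/-- `ε_{ab}{}^{pq}`: the Levi-Civita tensor with its last two indices raised
by the Minkowski metric. -/
def levUp (a b p q : Fin 4) : ℝ := ∑ r, ∑ s, mink p r * mink q s * lev a b r s

/-- The Kronecker delta on `Fin 4`. -/
def kd (a b : Fin 4) : ℝ := if a = b then 1 else 0

/-- Hodge dual `⋆F_{ab} = (1/2) ε_{ab}{}^{pq} F_{pq}` of a rank-2 tensor. -/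
def hodge2 (F : Fin 4 → Fin 4 → ℝ) (a b : Fin 4) : ℝ :=
  (1/2) * ∑ p, ∑ q, levUp a b p q * F p q

/-- Left Hodge dual `←⋆X_{abcd} = (1/2) ε_{ab}{}^{pq} X_{pqcd}`. -/
def leftD (X : Fin 4 → Fin 4 → Fin 4 → Fin 4 → ℝ) (a b c d : Fin 4) : ℝ :=
  (1/2) * ∑ p, ∑ q, levUp a b p q * X p q c d

/-- Right Hodge dual `→⋆X_{abcd} = (1/2) ε_{cd}{}^{pq} X_{abpq}`. -/
def rightD (X : Fin 4 → Fin 4 → Fin 4 → Fin 4 → ℝ) (a b c d : Fin 4) : ℝ :=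
  (1/2) * ∑ p, ∑ q, levUp c d p q * X a b p q

/-- Double Hodge dual `⋆⋆X_{abcd} = (1/4) ε_{ab}{}^{pq} ε_{cd}{}^{rs} X_{pqrs}`. -/
def dblD (X : Fin 4 → Fin 4 → Fin 4 → Fin 4 → ℝ) (a b c d : Fin 4) : ℝ :=
  (1/4) * ∑ p, ∑ q, ∑ r, ∑ s, levUp a b p q * levUp c d r s * X p q r s

/-- First trace `X_{ac} = η^{bd} X_{abcd}` of a (2,2) double form. -/
def tr1 (X : Fin 4 → Fin 4 → Fin 4 → Fin 4 → ℝ) (a c : Fin 4) : ℝ :=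
  ∑ b, ∑ d, mink b d * X a b c d

/-- Second trace `X = η^{ac} X_{ac}` of a (2,2) double form. -/
def tr2 (X : Fin 4 → Fin 4 → Fin 4 → Fin 4 → ℝ) : ℝ :=
  ∑ a, ∑ c, mink a c * tr1 X a c

/-- Hatted (trace-free) tensor `X̂_{ab} = X_{ab} − (1/4) X η_{ab}`. -/
def hatT (X : Fin 4 → Fin 4 → Fin 4 → Fin 4 → ℝ) (a b : Fin 4) : ℝ :=
  tr1 X a b - (1/4) * tr2 X * mink a b

/-- Rank-2 tensor with both indices raised by the Minkowski metric. -/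
def up2 (F : Fin 4 → Fin 4 → ℝ) (a b : Fin 4) : ℝ :=
  ∑ p, ∑ q, mink a p * mink b q * F p q

/-- Rank-4 tensor with all indices raised by the Minkowski metric. -/
def up4 (X : Fin 4 → Fin 4 → Fin 4 → Fin 4 → ℝ) (a b c d : Fin 4) : ℝ :=
  ∑ p, ∑ q, ∑ r, ∑ s, mink a p * mink b q * mink c r * mink d s * X p q r s

/-- `Y^{a}{}_{k₁}{}^{b}{}_{k₂}`: indices 1 and 3 raised. -/
def mix13 (Y : Fin 4 → Fin 4 → Fin 4 → Fin 4 → ℝ) (a k₁ b k₂ : Fin 4) : ℝ :=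
  ∑ p, ∑ q, mink a p * mink b q * Y p k₁ q k₂

/-- `Y_{c}{}^{k₁}{}_{d}{}^{k₂}`: indices 2 and 4 raised. -/
def mix24 (Y : Fin 4 → Fin 4 → Fin 4 → Fin 4 → ℝ) (c k₁ d k₂ : Fin 4) : ℝ :=
  ∑ p, ∑ q, mink k₁ p * mink k₂ q * Y c p d q

/-- `Y^{a}{}_{k₁ d k₂}`: index 1 raised. -/
def up1 (Y : Fin 4 → Fin 4 → Fin 4 → Fin 4 → ℝ) (a k₁ d k₂ : Fin 4) : ℝ :=
  ∑ p, mink a p * Y p k₁ d k₂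

/-- `Y_{c}{}^{k₁ b k₂}`: indices 2, 3 and 4 raised. -/
def mix234 (Y : Fin 4 → Fin 4 → Fin 4 → Fin 4 → ℝ) (c k₁ b k₂ : Fin 4) : ℝ :=
  ∑ p, ∑ q, ∑ r, mink k₁ p * mink b q * mink k₂ r * Y c p q r

/-- The diagonal entries of the Minkowski metric. -/
def minkDiag (a : Fin 4) : ℝ := if a = 0 then 1 else -1

lemma minkDiag_mul_self (a : Fin 4) : minkDiag a * minkDiag a = 1 := by
  unfold minkDiag; split_ifs <;> norm_num

lemma mink_eq_minkDiag_mul_kd (a b : Fin 4) : mink a b = minkDiag a * kd a b := by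
  simp [mink, minkDiag, kd]

lemma sum_mink_mul (a : Fin 4) (f : Fin 4 → ℝ) :
    ∑ p, mink a p * f p = minkDiag a * f a := by
  simp [mink_eq_minkDiag_mul_kd, kd]

lemma levUp_eq (a b p q : Fin 4) :
    levUp a b p q = minkDiag p * minkDiag q * lev a b p q := by
  simp only [levUp, mul_assoc, ← Finset.mul_sum, sum_mink_mul]

/-- The Hodge dual of an antisymmetric tensor in components. -/
lemma hodge2_eq_of_antisymm {F : Fin 4 → Fin 4 → ℝ} (hF : ∀ a b, F a b = -F b a) :
    hodge2 F = ![![0, F 2 3, -F 1 3, F 1 2], ![-F 2 3, 0, -F 0 3, F 0 2],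
      ![F 1 3, F 0 3, 0, -F 0 1], ![-F 1 2, -F 0 2, F 0 1, 0]] := by
  have h10 := hF 1 0
  have h20 := hF 2 0
  have h30 := hF 3 0
  have h21 := hF 2 1
  have h31 := hF 3 1
  have h32 := hF 3 2
  funext a b
  fin_cases a <;> fin_cases b <;>
    simp [hodge2, levUp_eq, lev, minkDiag, Fin.sum_univ_four] <;> linarith

/-- Two-form identity
`⋆F_{bk} ⋆G_d{}^k − F_{dk} G_b{}^k = −(1/2) η_{bd} F_{rs} G^{rs}`. -/
lemma hodge2_mul_hodge2_sub {F G : Fin 4 → Fin 4 → ℝ} (hF : ∀ a b, F a b = -F b a)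
    (hG : ∀ a b, G a b = -G b a) (b d : Fin 4) :
    ∑ k, minkDiag k * (hodge2 F b k * hodge2 G d k) - ∑ k, minkDiag k * (F d k * G b k) =
      -(1/2) * mink b d * ∑ r, ∑ s, minkDiag r * minkDiag s * (F r s * G r s) := by
  have diagF (a : Fin 4) : F a a = 0 := by linarith [hF a a]
  have diagG (a : Fin 4) : G a a = 0 := by linarith [hG a a]
  rw [hodge2_eq_of_antisymm hF, hodge2_eq_of_antisymm hG]
  fin_cases b <;> fin_cases d <;>
    simp [mink, minkDiag, Fin.sum_univ_four, diagF, diagG, hF 1 0, hF 2 0, hF 3 0, hF 2 1,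
      hF 3 1, hF 3 2, hG 1 0, hG 2 0, hG 3 0, hG 2 1, hG 3 1, hG 3 2] <;> ring

/-- The Hodge dual is an anti-isometry: `⋆F_{rs} ⋆G^{rs} = −F_{rs} G^{rs}`. -/
lemma sum_hodge2_mul_hodge2 {F G : Fin 4 → Fin 4 → ℝ} (hF : ∀ a b, F a b = -F b a)
    (hG : ∀ a b, G a b = -G b a) :
    ∑ r, ∑ s, minkDiag r * minkDiag s * (hodge2 F r s * hodge2 G r s) =
      -∑ r, ∑ s, minkDiag r * minkDiag s * (F r s * G r s) := by
  have h (b : Fin 4) := hodge2_mul_hodge2_sub hF hG b b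
  have h0 := h 0
  have h1 := h 1
  have h2 := h 2
  have h3 := h 3
  simp [mink, minkDiag, Fin.sum_univ_four] at h0 h1 h2 h3 ⊢
  linarith

lemma rightD_eq_hodge2 (X : Fin 4 → Fin 4 → Fin 4 → Fin 4 → ℝ) (a b : Fin 4) :
    rightD X a b = hodge2 (X a b) := rfl

lemma leftD_eq_hodge2 (X : Fin 4 → Fin 4 → Fin 4 → Fin 4 → ℝ) (a b c d : Fin 4) :
    leftD X a b c d = hodge2 (fun p q => X p q c d) a b := rfl

/-- If `X` and its right dual have definite pair symmetry, the left and right duals agree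
up to sign. -/
lemma leftD_eq_mul_rightD {X : Fin 4 → Fin 4 → Fin 4 → Fin 4 → ℝ} {e e' : ℝ}
    (he : ∀ a b c d, X c d a b = e * X a b c d)
    (he' : ∀ a b c d, rightD X c d a b = e' * rightD X a b c d) (a b c d : Fin 4) :
    leftD X a b c d = e * e' * rightD X a b c d := by
  rw [mul_assoc, ← he']
  simp only [leftD, rightD, Finset.mul_sum]
  refine Finset.sum_congr rfl fun p _ => Finset.sum_congr rfl fun q _ => ?_
  rw [he c d p q]
  ring

/-- `X_{akrs} X_c{}^{krs} = (1/4) η_{ac} X_{pqrs} X^{pqrs}` when the left and right duals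
agree up to sign. -/
lemma sum_mul_eq_of_leftD {X : Fin 4 → Fin 4 → Fin 4 → Fin 4 → ℝ}
    (h1 : ∀ a b c d, X a b c d = -X b a c d) (h2 : ∀ a b c d, X a b c d = -X a b d c)
    {σ : ℝ} (hσ : σ * σ = 1) (hl : ∀ a b c d, leftD X a b c d = σ * rightD X a b c d)
    (a c : Fin 4) :
    ∑ k, minkDiag k * ∑ r, ∑ s, minkDiag r * minkDiag s * (X a k r s * X c k r s) =
      (1/4) * mink a c * ∑ r, ∑ s, minkDiag r * minkDiag s *
        ∑ p, ∑ q, minkDiag p * minkDiag q * (X p q r s * X p q r s) := by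
  have hsq (r s : Fin 4) : ∑ k, minkDiag k * (rightD X a k r s * rightD X c k r s) -
      ∑ k, minkDiag k * (X c k r s * X a k r s) =
      -(1/2) * mink a c * ∑ p, ∑ q, minkDiag p * minkDiag q * (X p q r s * X p q r s) := by
    rw [← hodge2_mul_hodge2_sub (F := fun p q => X p q r s) (G := fun p q => X p q r s)
      (fun p q => h1 p q r s) (fun p q => h1 p q r s) a c]
    simp only [← leftD_eq_hodge2, hl, mul_mul_mul_comm σ, hσ, one_mul]
  have swap (f : Fin 4 → Fin 4 → Fin 4 → ℝ) :
      ∑ r, ∑ s, minkDiag r * minkDiag s * ∑ k, minkDiag k * f k r s =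
        ∑ k, minkDiag k * ∑ r, ∑ s, minkDiag r * minkDiag s * f k r s := by
    simp only [Fin.sum_univ_four]
    ring
  have hR (k : Fin 4) := sum_hodge2_mul_hodge2 (h2 a k) (h2 c k)
  have hsum : ∑ r, ∑ s, minkDiag r * minkDiag s *
      (∑ k, minkDiag k * (rightD X a k r s * rightD X c k r s) -
        ∑ k, minkDiag k * (X c k r s * X a k r s)) =
      -(1/2) * mink a c * ∑ r, ∑ s, minkDiag r * minkDiag s *
        ∑ p, ∑ q, minkDiag p * minkDiag q * (X p q r s * X p q r s) := by
    simp only [hsq, mul_left_comm _ (-(1/2) * mink a c), ← Finset.mul_sum]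
  simp only [mul_sub, Finset.sum_sub_distrib, swap, rightD_eq_hodge2, hR, mul_neg,
    Finset.sum_neg_distrib, mul_comm (X c _ _ _)] at hsum
  linarith

/-- Generalised Debever identity for an irreducible (2,2) double form. -/
theorem generalised_debever (X : Fin 4 → Fin 4 → Fin 4 → Fin 4 → ℝ)
    (h1 : ∀ a b c d, X a b c d = -X b a c d)
    (h2 : ∀ a b c d, X a b c d = -X a b d c)
    (hirr : ∃ e e' : ℝ, (e = 1 ∨ e = -1) ∧ (e' = 1 ∨ e' = -1) ∧
      (∀ a b c d, X c d a b = e * X a b c d) ∧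
      (∀ a b c d, rightD X c d a b = e' * rightD X a b c d)) :
    ∀ a b c d,
      (∑ k₁, ∑ k₂, mix13 (rightD X) a k₁ b k₂ * mix24 (rightD X) c k₁ d k₂) -
        (∑ k₁, ∑ k₂, up1 X a k₁ d k₂ * mix234 X c k₁ b k₂) =
      -(1/2) * ((1/4) * ∑ p, ∑ q, ∑ r, ∑ s, X p q r s * up4 X p q r s) *
        kd a c * kd b d := by
  obtain ⟨e, e', he, he', hX, hY⟩ := hirr
  have hσ : e * e' * (e * e') = 1 := by
    rcases he with rfl | rfl <;> rcases he' with rfl | rfl <;> norm_num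
  intro a b c d
  have hS := sum_mul_eq_of_leftD h1 h2 hσ (leftD_eq_mul_rightD hX hY) a c
  have hF (k : Fin 4) := hodge2_mul_hodge2_sub (h2 a k) (h2 c k) b d
  have hsum : ∑ k₁, minkDiag k₁ *
      (∑ k₂, minkDiag k₂ * (rightD X a k₁ b k₂ * rightD X c k₁ d k₂) -
        ∑ k₂, minkDiag k₂ * (X a k₁ d k₂ * X c k₁ b k₂)) =
      -(1/2) * mink b d * ∑ k₁, minkDiag k₁ * ∑ r, ∑ s,
        minkDiag r * minkDiag s * (X a k₁ r s * X c k₁ r s) := by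
    rw [Finset.mul_sum]
    refine Finset.sum_congr rfl fun k _ => ?_
    rw [rightD_eq_hodge2, rightD_eq_hodge2, hF]
    ring
  have hT : ∑ p, ∑ q, ∑ r, ∑ s, X p q r s * up4 X p q r s =
      ∑ r, ∑ s, minkDiag r * minkDiag s *
        ∑ p, ∑ q, minkDiag p * minkDiag q * (X p q r s * X p q r s) := by
    have hup (p q r s : Fin 4) : up4 X p q r s =
        minkDiag p * (minkDiag q * (minkDiag r * (minkDiag s * X p q r s))) := by
      simp only [up4, mul_assoc, ← Finset.mul_sum, sum_mink_mul]
    simp only [hup, Finset.mul_sum]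
    calc _ = ∑ p, ∑ r, ∑ s, ∑ q, minkDiag r * minkDiag s *
          (minkDiag p * minkDiag q * (X p q r s * X p q r s)) := by
          refine Finset.sum_congr rfl fun p _ => ?_
          rw [Finset.sum_comm]
          refine Finset.sum_congr rfl fun r _ => ?_
          rw [Finset.sum_comm]
          refine Finset.sum_congr rfl fun s _ => Finset.sum_congr rfl fun q _ => ?_
          ring
      _ = _ := by
          rw [Finset.sum_comm]
          exact Finset.sum_congr rfl fun r _ => Finset.sum_comm
  rw [hS] at hsum
  have hL : (∑ k₁, ∑ k₂, mix13 (rightD X) a k₁ b k₂ * mix24 (rightD X) c k₁ d k₂) -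
        (∑ k₁, ∑ k₂, up1 X a k₁ d k₂ * mix234 X c k₁ b k₂) =
      minkDiag a * minkDiag b * ∑ k₁, minkDiag k₁ *
      (∑ k₂, minkDiag k₂ * (rightD X a k₁ b k₂ * rightD X c k₁ d k₂) -
        ∑ k₂, minkDiag k₂ * (X a k₁ d k₂ * X c k₁ b k₂)) := by
    simp only [mix13, mix24, up1, mix234, mul_assoc, ← Finset.mul_sum, sum_mink_mul]
    simp only [Finset.mul_sum, ← Finset.sum_sub_distrib]
    refine Finset.sum_congr rfl fun k₁ _ => Finset.sum_congr rfl fun k₂ _ => ?_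
    ring
  rw [hL, hsum, hT, mink_eq_minkDiag_mul_kd, mink_eq_minkDiag_mul_kd]
  linear_combination (-(1/8) * kd a c * kd b d * (∑ r, ∑ s, minkDiag r * minkDiag s *
    ∑ p, ∑ q, minkDiag p * minkDiag q * (X p q r s * X p q r s))) *
    (minkDiag b * minkDiag b * minkDiag_mul_self a + minkDiag_mul_self b)
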